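/- arXiv:1504.01941 — 2 statements merged into one kernel-verified Lean document; each statement's English description precedes it below -/
import Mathlib

section
/- For every k with 1 ≤ k ≤ n−1, the determinant of the ordered product D_{Q,n−k+1} := (I − D_k·M_q(t_{n,k+1}))·(I − D_k·M_q(t_{n−1,k+1}))⋯(I − D_k·M_q(t_{k+2,k+1}))·(I − D_k) factors as det D_{Q,n−k+1} = ∏_{m=2}^{n−k+1} ∏_{T} (1 − σ_T)^{(m−2)!·m·(n−m)!}, where the inner product runs over all subsets T ⊆ Fin n of cardinality m. -/
/-- The square complex matrices indexed by the symmetric group `Equiv.Perm (Fin n)`. -/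
abbrev PermMatrix (n : ℕ) := Matrix (Equiv.Perm (Fin n)) (Equiv.Perm (Fin n)) ℂ

/-- The set of inversions `I(g) = {(a,b) : a < b and g(a) > g(b)}` of a permutation. -/
def invSet {n : ℕ} (g : Equiv.Perm (Fin n)) : Finset (Fin n × Fin n) :=
  Finset.univ.filter fun p => p.1 < p.2 ∧ g p.2 < g p.1

/-- The matrix `M_q(g)`, with `(σ,τ)`-entry `∏_{(a,b) ∈ I(g)} q (τ b) (τ a)`
if `σ = τ ∘ g⁻¹` and `0` otherwise. -/
def twistMat (n : ℕ) (q : Fin n → Fin n → ℂ) (g : Equiv.Perm (Fin n)) : PermMatrix n :=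
  fun σ τ => if σ = τ * g⁻¹ then ∏ p ∈ invSet g, q (τ p.2) (τ p.1) else 0

/-- `IsTCycle a b s` says that `s` is the cycle `t_{b,a}` (for `a ≤ b`):
`s i = i + 1` for `a ≤ i ≤ b - 1`, `s b = a`, and `s i = i` otherwise
(in particular `t_{b,b} = id`). -/
def IsTCycle {n : ℕ} (a b : Fin n) (s : Equiv.Perm (Fin n)) : Prop :=
  (∀ i : Fin n, a ≤ i → i < b → (s i : ℕ) = (i : ℕ) + 1) ∧ s b = a ∧
    ∀ i : Fin n, ¬(a ≤ i ∧ i ≤ b) → s i = i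

/-- The successor `a + 1` in `Fin n` (computed mod `n`; in all uses below one has
`a + 1 < n`, so no wraparound occurs). -/
def finSucc {n : ℕ} (a : Fin n) : Fin n :=
  ⟨((a : ℕ) + 1) % n, Nat.mod_lt _ a.pos⟩

/-- The diagonal matrix `D_a = M_q(t_{a+1,a})²` whose diagonal entry at `τ` is
`q (τ a) (τ (a+1)) · q (τ (a+1)) (τ a)`. -/
def Dmat (n : ℕ) (q : Fin n → Fin n → ℂ) (a : Fin n) : PermMatrix n :=
  Matrix.diagonal fun τ => q (τ a) (τ (finSucc a)) * q (τ (finSucc a)) (τ a)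

/-- `σ_T = ∏_{i,j ∈ T, i ≠ j} q i j`, the product over all ordered pairs of distinct
elements of `T`. -/
def sigmaT {n : ℕ} (q : Fin n → Fin n → ℂ) (T : Finset (Fin n)) : ℂ :=
  ∏ p ∈ (T ×ˢ T).filter fun p => p.1 ≠ p.2, q p.1 p.2

/-!
The matrix `D_k M_q(t_{b,k+1})` is monomial: its underlying permutation of the group `S_n` is right
multiplication by the inverse of a cycle on `S = {k+1, …, b}`. Expanding over permutations,
`det (1 - W) = 1 - ∏ w` for a monomial matrix `W` of a single cycle with weights `w`, so in general
`det (1 - W)` is the product of these factors over the cycles of `W`. Here the cycle through `τ` is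
a coset consisting of `#S` permutations `σ`, all with the same restriction outside `S`, on which
`σ b` takes each value in `τ S` exactly once. Hence its weights multiply to `σ_T` with
`T = τ (S ∪ {k})`. Exactly `m! (n - m)!` permutations yield a given `T` with `m = #S + 1`
elements, that is `m! (n - m)! / (m - 1) = (m - 2)! m (n - m)!` cycles.
-/

open Equiv.Perm Finset
open Nat (factorial)

theorem eq_one_or_eq_of_isCycleOn_univ {X : Type*} [Finite X] {φ σ : Equiv.Perm X}
    (hφ : φ.IsCycleOn Set.univ) (h : ∀ x, σ x = x ∨ σ x = φ x) : σ = 1 ∨ σ = φ := by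
  by_cases hfix : ∀ x, σ x = x
  · exact .inl (Equiv.ext hfix)
  obtain ⟨x, hx⟩ := not_forall.1 hfix
  -- Injectivity of `σ` propagates agreement with `φ` along the cycle.
  have agree (i : ℕ) : σ ((φ ^ i) x) = φ ((φ ^ i) x) := by
    induction i with
    | zero => exact (h x).resolve_left hx
    | succ i ih =>
      rw [pow_succ', mul_apply]
      refine (h _).elim (fun hstay => ?_) id
      rw [hstay]
      exact congrArg φ (σ.injective (hstay.trans ih.symm)).symm
  refine .inr (Equiv.ext fun y => ?_)
  obtain ⟨i, rfl⟩ := hφ.exists_pow_eq' Set.finite_univ (Set.mem_univ x) (Set.mem_univ y)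
  exact agree i

theorem mk_sameCycle_eq_iff {X : Type*} {φ : Equiv.Perm X} {x y : X} :
    Quotient.mk (SameCycle.setoid φ) y = Quotient.mk _ x ↔ φ.SameCycle x y :=
  Quotient.eq.trans sameCycle_comm

section WeightedPerm

variable {X R : Type*} [DecidableEq X]

/-- The monomial matrix with underlying permutation `φ` and weights `w`: the only possibly nonzero
entry in column `y` is `w y`, in row `φ y`. -/
def weightedPermMatrix [Zero R] (φ : Equiv.Perm X) (w : X → R) : Matrix X X R :=
  .of fun x y => if x = φ y then w y else 0

variable [Fintype X] [CommRing R]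

theorem det_one_sub_weightedPermMatrix_of_isCycleOn_univ [Nonempty X] {φ : Equiv.Perm X}
    (hφ : φ.IsCycleOn Set.univ) (w : X → R) :
    (1 - weightedPermMatrix φ w).det = 1 - ∏ x, w x := by
  rcases subsingleton_or_nontrivial X with _ | _
  · obtain ⟨x⟩ := ‹Nonempty X›
    rw [Matrix.det_eq_elem_of_subsingleton _ x, Fintype.prod_subsingleton w x]
    simp [weightedPermMatrix, eq_iff_true_of_subsingleton]
  have hmove (x : X) : φ x ≠ x := hφ.apply_ne Set.nontrivial_univ (Set.mem_univ x)
  have hcycle : φ.IsCycle := ⟨Classical.arbitrary X, hmove _, fun y _ => hφ.2 trivial trivial⟩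
  have hsupp : φ.support = univ := by ext; simp [hmove]
  rw [Matrix.det_apply', Fintype.sum_eq_add 1 φ]
  · have hsign : ((sign φ : ℤ) : R) = -(-1) ^ Fintype.card X := by
      rw [hcycle.sign, hsupp, card_univ]; simp
    have hone : ∏ x, (1 - weightedPermMatrix φ w) ((1 : Equiv.Perm X) x) x = 1 :=
      prod_eq_one fun x _ => by simp [weightedPermMatrix, (hmove x).symm]
    have hcyc : ∏ x, (1 - weightedPermMatrix φ w) (φ x) x =
        (-1) ^ Fintype.card X * ∏ x, w x := by
      simp [weightedPermMatrix, hmove, prod_neg]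
    rw [hone, hcyc, hsign, ← mul_assoc, neg_mul, ← mul_pow]
    simp [sub_eq_add_neg]
  · rintro rfl
    exact hmove (Classical.arbitrary X) rfl
  · rintro σ ⟨hσ, hσ'⟩
    obtain ⟨x, hx⟩ : ∃ x, ¬(σ x = x ∨ σ x = φ x) := by
      by_contra! h
      exact (eq_one_or_eq_of_isCycleOn_univ hφ h).elim hσ hσ'
    rw [not_or] at hx
    rw [prod_eq_zero (mem_univ x), mul_zero]
    simp [weightedPermMatrix, hx]

theorem det_eq_prod_det_toSquareBlock {α : Type*} [Fintype α] [DecidableEq α] (M : Matrix X X R)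
    (f : X → α) (hM : ∀ x y, f x ≠ f y → M x y = 0) :
    M.det = ∏ a, (M.toSquareBlock f a).det :=
  letI := Classical.decRel (WellOrderingRel (α := α))
  letI := linearOrderOfSTO (WellOrderingRel (α := α))
  Matrix.BlockTriangular.det_fintype fun x y hxy => hM x y hxy.ne'

open scoped Classical in
theorem det_one_sub_weightedPermMatrix (φ : Equiv.Perm X) (w : X → R) :
    (1 - weightedPermMatrix φ w).det =
      ∏ c : Quotient (SameCycle.setoid φ), (1 - ∏ x with Quotient.mk _ x = c, w x) := by
  let cycleOf (x : X) : Quotient (SameCycle.setoid φ) := Quotient.mk _ x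
  have hφ (x : X) : cycleOf (φ x) = cycleOf x :=
    Quotient.sound (sameCycle_apply_left.2 (.refl φ x))
  rw [det_eq_prod_det_toSquareBlock _ cycleOf]
  · refine prod_congr rfl fun c _ => ?_
    let φc : Equiv.Perm {x // cycleOf x = c} := φ.subtypePerm fun x => by rw [hφ]
    have hblock : (1 - weightedPermMatrix φ w).toSquareBlock cycleOf c =
        1 - weightedPermMatrix φc (fun x => w x) := by
      ext x y
      simp [Matrix.toSquareBlock_def, weightedPermMatrix, Matrix.one_apply, Subtype.ext_iff, φc]
    have hcyc : φc.IsCycleOn Set.univ :=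
      ⟨Set.bijOn_univ.2 φc.bijective, fun x _ y _ =>
        (Quotient.exact (x.2.trans y.2.symm)).subtypePerm⟩
    obtain ⟨x, hx⟩ := Quotient.exists_rep c
    have : Nonempty {x // cycleOf x = c} := ⟨⟨x, hx⟩⟩
    rw [hblock, det_one_sub_weightedPermMatrix_of_isCycleOn_univ hcyc]
    congr 1
    exact (prod_subtype _ (by simp [cycleOf]) w).symm
  · intro x y hxy
    have hne : x ≠ y := by rintro rfl; exact hxy rfl
    have hne' : x ≠ φ y := by rintro rfl; exact hxy (hφ y)
    simp [weightedPermMatrix, hne, hne']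

open scoped Classical in
theorem card_fiber_eq_card_cycles_mul {β : Type*} [DecidableEq β] {φ : Equiv.Perm X} {r : ℕ}
    (hr : ∀ x, #{y | φ.SameCycle x y} = r) {f : X → β}
    (hf : ∀ x y, φ.SameCycle x y → f x = f y) (b : β) :
    #{x | f x = b} =
      #{c : Quotient (SameCycle.setoid φ) | c.lift f hf = b} * r := by
  rw [card_eq_sum_card_fiberwise (f := Quotient.mk (SameCycle.setoid φ))
    (t := {c | c.lift f hf = b}) fun x hx => by simpa using hx]
  refine sum_const_nat fun c hc => ?_
  induction c using Quotient.inductionOn with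
  | h x =>
    have hx : f x = b := (mem_filter.1 hc).2
    rw [← hr x, filter_filter]
    congr 1
    refine filter_congr fun y _ => ?_
    rw [mk_sameCycle_eq_iff]
    exact and_iff_right_of_imp fun hy => (hf x y hy).symm.trans hx

open scoped Classical in
theorem det_one_sub_weightedPermMatrix_of_card_sameCycle_eq {β : Type*} [DecidableEq β]
    {φ : Equiv.Perm X} {w : X → R} {r : ℕ} (hr : ∀ x, #{y | φ.SameCycle x y} = r) {f : X → β}
    (hf : ∀ x y, φ.SameCycle x y → f x = f y) {s : β → R}
    (hw : ∀ x, ∏ y with φ.SameCycle x y, w y = s (f x)) {t : Finset β} (ht : ∀ x, f x ∈ t) :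
    (1 - weightedPermMatrix φ w).det =
      ∏ b ∈ t, (1 - s b) ^ (#{x | f x = b} / r) := by
  rcases isEmpty_or_nonempty X with _ | ⟨⟨x₀⟩⟩
  · simp
  have hpos : 0 < r := hr x₀ ▸ card_pos.2 ⟨x₀, by simp [SameCycle.refl]⟩
  have hprod (c : Quotient (SameCycle.setoid φ)) :
      ∏ x with Quotient.mk _ x = c, w x = s (c.lift f hf) := by
    induction c using Quotient.inductionOn with
    | h x => simpa only [mk_sameCycle_eq_iff, Quotient.lift_mk] using hw x
  have hmaps (c : Quotient (SameCycle.setoid φ)) : c.lift f hf ∈ t := c.inductionOn ht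
  simp only [det_one_sub_weightedPermMatrix, hprod, card_fiber_eq_card_cycles_mul hr hf,
    Nat.mul_div_cancel _ hpos]
  rw [← prod_fiberwise_of_maps_to fun c _ => hmaps c]
  refine prod_congr rfl fun b _ => prod_eq_pow_card fun c hc => ?_
  rw [(mem_filter.1 hc).2]

end WeightedPerm

theorem image_perm_eq_self_iff {α : Type*} [DecidableEq α] {S : Finset α} {τ : Equiv.Perm α} :
    S.image τ = S ↔ ∀ x, τ x ∈ S ↔ x ∈ S := by
  refine ⟨fun h x => ?_, fun h => ?_⟩
  · conv_lhs => rw [← h]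
    exact τ.injective.mem_finset_image
  · exact eq_of_subset_of_card_le (image_subset_iff.2 fun x => (h x).2)
      (card_image_of_injective _ τ.injective).ge

theorem card_perm_image_eq {α : Type*} [Fintype α] [DecidableEq α] {S T : Finset α}
    (hST : #T = #S) :
    #{τ : Equiv.Perm α | S.image τ = T} =
      factorial #S * factorial (Fintype.card α - #S) := by
  let ρ : Equiv.Perm α := (Finset.equivOfCardEq hST.symm).extendSubtype
  have hρ : S.image ρ = T := by
    refine eq_of_subset_of_card_le (image_subset_iff.2 fun x hx => ?_) ?_
    · exact Equiv.extendSubtype_mem _ x hx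
    · rw [card_image_of_injective _ ρ.injective, hST]
  have hmem (τ : Equiv.Perm α) :
      S.image (ρ * τ) = T ↔ (fun x => decide (x ∈ S)) ∘ τ = fun x => decide (x ∈ S) := by
    rw [coe_mul, ← image_image, ← hρ, (image_injective ρ.injective).eq_iff,
      image_perm_eq_self_iff]
    simp [funext_iff]
  have hcard : #{τ : Equiv.Perm α | S.image τ = T} =
      Fintype.card {τ : Equiv.Perm α //
        (fun x => decide (x ∈ S)) ∘ τ = fun x => decide (x ∈ S)} := by
    rw [Fintype.card_subtype]
    exact (card_equiv (Equiv.mulLeft ρ) fun τ => by simp [← hmem]).symm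
  rw [hcard, DomMulAct.stabilizer_card, Fintype.prod_bool]
  simp [Fintype.card_subtype_compl]

theorem prod_offDiag {α M : Type*} [DecidableEq α] [CommMonoid M] (f : α × α → M) (S : Finset α) :
    ∏ p ∈ S.offDiag, f p = ∏ x ∈ S, ∏ y ∈ S.erase x, f (x, y) := by
  rw [prod_sigma']
  refine prod_bij' (fun p _ => ⟨p.1, p.2⟩) (fun p _ => (p.1, p.2)) ?_ ?_ ?_ ?_ ?_ <;>
    simp +contextual [eq_comm]

theorem prod_offDiag_insert {α M : Type*} [DecidableEq α] [CommMonoid M] (q : α → α → M)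
    {S : Finset α} {a : α} (ha : a ∉ S) :
    ∏ p ∈ (insert a S).offDiag, q p.1 p.2 =
      ∏ x ∈ S, (q a x * q x a * ∏ y ∈ S.erase x, q x y) := by
  have hdisj : Disjoint (S.offDiag ∪ {a} ×ˢ S) (S ×ˢ {a}) := by
    rw [disjoint_left]
    rintro ⟨x, y⟩
    grind
  have hdisj' : Disjoint S.offDiag ({a} ×ˢ S) := by
    rw [disjoint_left]
    rintro ⟨x, y⟩
    grind
  rw [offDiag_insert ha, prod_union hdisj, prod_union hdisj', prod_offDiag, prod_product,
    prod_product]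
  simp only [prod_singleton, prod_mul_distrib]
  ac_rfl

theorem factorial_succ_mul_div (r m : ℕ) (hr : 0 < r) :
    factorial (r + 1) * m / r = factorial (r - 1) * (r + 1) * m := by
  obtain ⟨s, rfl⟩ := Nat.exists_eq_add_of_lt hr
  refine Nat.div_eq_of_eq_mul_left hr ?_
  simp [Nat.factorial_succ]
  ring

section MulRight

theorem sameCycle_mulRight_iff {G : Type*} [Group G] {g x y : G} :
    (Equiv.mulRight g).SameCycle x y ↔ ∃ i : ℤ, x * g ^ i = y := by
  simp [SameCycle]

variable {α : Type*} {g τ σ : Equiv.Perm α} {S : Finset α} {b k : α}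

theorem apply_eq_of_sameCycle_mulRight (hk : g k = k)
    (hσ : (Equiv.mulRight g).SameCycle τ σ) : σ k = τ k := by
  obtain ⟨i, rfl⟩ := sameCycle_mulRight_iff.1 hσ
  simp [zpow_apply_eq_self_of_apply_eq_self hk i]

theorem bijOn_apply_sameCycle_mulRight {S : Set α} (hS : g.IsCycleOn S)
    (hfix : ∀ i ∉ S, g i = i) (hb : b ∈ S) :
    Set.BijOn (fun σ : Equiv.Perm α => σ b) {σ | (Equiv.mulRight g).SameCycle τ σ} (τ '' S) := by
  refine ⟨?_, ?_, ?_⟩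
  · intro σ hσ
    obtain ⟨i, rfl⟩ := sameCycle_mulRight_iff.1 hσ
    exact ⟨_, (hS.1.perm_zpow i).mapsTo hb, rfl⟩
  · intro σ hσ σ' hσ' h
    obtain ⟨i, rfl⟩ := sameCycle_mulRight_iff.1 hσ
    obtain ⟨j, rfl⟩ := sameCycle_mulRight_iff.1 hσ'
    have hij : (g ^ i) b = (g ^ j) b := τ.injective h
    congr 1
    ext x
    by_cases hx : x ∈ S
    · obtain ⟨m, rfl⟩ := hS.2 hb hx
      rw [zpow_apply_comm g i, zpow_apply_comm g j, hij]
    · simp [zpow_apply_eq_self_of_apply_eq_self (hfix x hx)]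
  · rintro _ ⟨x, hx, rfl⟩
    obtain ⟨i, hi⟩ := hS.2 hb hx
    exact ⟨τ * g ^ i, sameCycle_mulRight_iff.2 ⟨i, rfl⟩, congrArg τ hi⟩

variable [DecidableEq α]

theorem image_eq_of_sameCycle_mulRight (hg : Set.BijOn g S S)
    (hσ : (Equiv.mulRight g).SameCycle τ σ) : S.image σ = S.image τ := by
  obtain ⟨i, rfl⟩ := sameCycle_mulRight_iff.1 hσ
  have hgi : S.image ⇑(g ^ i) = S := coe_injective <| by simpa using! (hg.perm_zpow i).image_eq
  rw [Equiv.Perm.coe_mul, ← image_image, hgi]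

variable [Fintype α]

theorem prod_sameCycle_mulRight {M : Type*} [CommMonoid M] (hS : g.IsCycleOn S)
    (hfix : ∀ i ∉ S, g i = i) (hb : b ∈ S) (v : α → M) (τ : Equiv.Perm α) :
    ∏ σ with (Equiv.mulRight g).SameCycle τ σ, v (σ b) = ∏ x ∈ S.image τ, v x := by
  have h := bijOn_apply_sameCycle_mulRight (τ := τ) hS hfix hb
  rw [← coe_image] at h
  exact prod_nbij _ (by simpa using! h.mapsTo) (by simpa using h.injOn) (by simpa using h.surjOn)
    fun _ _ => rfl

theorem card_sameCycle_mulRight (hS : g.IsCycleOn S) (hfix : ∀ i ∉ S, g i = i) (hb : b ∈ S)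
    (τ : Equiv.Perm α) : #{σ | (Equiv.mulRight g).SameCycle τ σ} = #S := by
  have h := bijOn_apply_sameCycle_mulRight (τ := τ) hS hfix hb
  rw [← coe_image] at h
  rw [← card_image_of_injective S τ.injective]
  exact card_nbij _ (by simpa using! h.mapsTo) (by simpa using h.injOn) (by simpa using h.surjOn)

theorem det_one_sub_weightedPermMatrix_mulRight {R : Type*} [CommRing R] (q : α → α → R)
    (hS : g.IsCycleOn S) (hfix : ∀ i ∉ S, g i = i) (hb : b ∈ S) (hk : k ∉ S) :
    (1 - weightedPermMatrix (Equiv.mulRight g) fun τ =>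
      q (τ k) (τ b) * q (τ b) (τ k) * ∏ i ∈ S.erase b, q (τ b) (τ i)).det =
      ∏ T ∈ powersetCard (#S + 1) univ, (1 - ∏ p ∈ T.offDiag, q p.1 p.2) ^
        (factorial (#S - 1) * (#S + 1) * factorial (Fintype.card α - (#S + 1))) := by
  have hcard : #(insert k S) = #S + 1 := card_insert_of_notMem hk
  have hinv {τ σ : Equiv.Perm α} (h : (Equiv.mulRight g).SameCycle τ σ) :
      σ k = τ k ∧ S.image σ = S.image τ :=
    ⟨apply_eq_of_sameCycle_mulRight (hfix k hk) h, image_eq_of_sameCycle_mulRight hS.1 h⟩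
  rw [det_one_sub_weightedPermMatrix_of_card_sameCycle_eq (r := #S)
    (f := fun τ : Equiv.Perm α => (insert k S).image τ) (s := fun T => ∏ p ∈ T.offDiag, q p.1 p.2)
    (t := powersetCard (#S + 1) univ)]
  · refine prod_congr rfl fun T hT => ?_
    have hT : #T = #(insert k S) := (mem_powersetCard_univ.1 hT).trans hcard.symm
    rw [card_perm_image_eq hT, hcard, factorial_succ_mul_div _ _ (card_pos.2 ⟨b, hb⟩)]
  · exact card_sameCycle_mulRight hS hfix hb
  · intro τ σ h
    simp only [image_insert, hinv h]
  · intro τ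
    have hk' : τ k ∉ S.image τ := by simpa using hk
    rw [image_insert, prod_offDiag_insert q hk', ← prod_sameCycle_mulRight hS hfix hb]
    refine prod_congr rfl fun σ hσ => ?_
    obtain ⟨hσk, hσS⟩ := hinv (mem_filter.1 hσ).2
    rw [hσk, ← hσS, ← image_erase σ.injective, prod_image fun _ _ _ _ h => σ.injective h]
  · intro τ
    rw [mem_powersetCard_univ, card_image_of_injective _ τ.injective, hcard]

end MulRight

section TCycle

variable {n : ℕ} {a b : Fin n} {g : Equiv.Perm (Fin n)}

namespace IsTCycle

theorem le (hg : IsTCycle a b g) : a ≤ b := by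
  by_contra h
  have hga : g a = a := hg.2.2 a fun ha => h ha.2
  exact h (g.injective (hga.trans hg.2.1.symm)).le

theorem val_apply (hg : IsTCycle a b g) (i : Fin n) :
    (g i : ℕ) = if a ≤ i ∧ i < b then (i : ℕ) + 1 else if i = b then (a : ℕ) else i := by
  obtain ⟨hsucc, hlast, hfix⟩ := hg
  split_ifs with h h'
  · exact hsucc i h.1 h.2
  · rw [h', hlast]
  · rw [hfix i (by grind)]

theorem eq_one (hg : IsTCycle a a g) : g = 1 :=
  Equiv.ext fun i => by
    by_cases hi : i = a
    · rw [hi]; exact hg.2.1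
    · exact hg.2.2 i (by grind)

theorem pow_apply (hg : IsTCycle a b g) {j : ℕ} (hj : (a : ℕ) + j ≤ b) :
    ((g ^ j) a : ℕ) = a + j := by
  induction j with
  | zero => simp
  | succ j ih =>
    have ih := ih (by omega)
    rw [pow_succ', Equiv.Perm.mul_apply, hg.1 _ (by grind) (by grind), ih, add_assoc]

theorem isCycleOn (hg : IsTCycle a b g) : g.IsCycleOn (Icc a b) := by
  have hab := hg.le
  have hmaps : Set.MapsTo g (Icc a b) (Icc a b) := fun i hi => by
    have := hg.val_apply i
    simp only [coe_Icc, Set.mem_Icc, Fin.le_def, Fin.lt_def, Fin.ext_iff] at hi hab this ⊢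
    grind
  have hreach (i : Fin n) (hi : i ∈ Icc a b) : g.SameCycle a i := by
    rw [mem_Icc] at hi
    exact ⟨(i - a : ℕ), Fin.ext (by rw [zpow_natCast, hg.pow_apply] <;> grind)⟩
  exact ⟨((finite_toSet _).injOn_iff_bijOn_of_mapsTo hmaps).1 g.injective.injOn,
    fun i hi j hj => (hreach i hi).symm.trans (hreach j hj)⟩

theorem invSet_eq (hg : IsTCycle a b g) : invSet g = Ico a b ×ˢ {b} := by
  have hab := hg.le
  ext ⟨i, j⟩
  have hi := hg.val_apply i
  have hj := hg.val_apply j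
  simp only [invSet, mem_filter_univ, mem_product, mem_Ico, mem_singleton]
  grind

end IsTCycle

theorem val_finSucc {k : Fin n} (hk : (k : ℕ) + 1 < n) : (finSucc k : ℕ) = k + 1 :=
  Nat.mod_eq_of_lt hk

theorem twistMat_eq_weightedPermMatrix (q : Fin n → Fin n → ℂ) (g : Equiv.Perm (Fin n)) :
    twistMat n q g = weightedPermMatrix (Equiv.mulRight g⁻¹)
      fun τ => ∏ p ∈ invSet g, q (τ p.2) (τ p.1) :=
  rfl

theorem twistMat_one (q : Fin n → Fin n → ℂ) : twistMat n q 1 = 1 := by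
  ext σ τ
  have hinv : invSet (1 : Equiv.Perm (Fin n)) = ∅ := by
    simp only [invSet, filter_eq_empty_iff]
    exact fun p _ h => lt_asymm h.1 h.2
  simp [twistMat, hinv, Matrix.one_apply]

theorem sigmaT_eq_prod_offDiag (q : Fin n → Fin n → ℂ) (T : Finset (Fin n)) :
    sigmaT q T = ∏ p ∈ T.offDiag, q p.1 p.2 :=
  prod_congr (by ext; simp [and_assoc]) fun _ _ => rfl

theorem Dmat_mul_twistMat (q : Fin n → Fin n → ℂ) {k : Fin n} (hk : k < finSucc k)
    (hg : IsTCycle (finSucc k) b g) :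
    Dmat n q k * twistMat n q g = weightedPermMatrix (Equiv.mulRight g⁻¹) fun τ =>
      q (τ k) (τ b) * q (τ b) (τ k) * ∏ i ∈ (Icc (finSucc k) b).erase b, q (τ b) (τ i) := by
  have hgk : g⁻¹ k = k := inv_eq_iff_eq.2 (hg.2.2 k fun h => hk.not_ge h.1).symm
  have hga : g⁻¹ (finSucc k) = b := inv_eq_iff_eq.2 hg.2.1.symm
  ext σ τ
  rw [Dmat, Matrix.diagonal_mul, twistMat_eq_weightedPermMatrix, hg.invSet_eq]
  by_cases h : σ = τ * g⁻¹
  · subst h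
    simp only [weightedPermMatrix, Matrix.of_apply, Equiv.coe_mulRight, if_true, prod_product,
      prod_singleton, Equiv.Perm.mul_apply, hgk, hga, Icc_erase_right]
  · simp [weightedPermMatrix, h]

theorem det_one_sub_Dmat_mul_twistMat (q : Fin n → Fin n → ℂ) {k : Fin n} (hk : (k : ℕ) + 1 < n)
    (hg : IsTCycle (finSucc k) b g) {m : ℕ} (hm : (b : ℕ) + 1 = k + m) :
    ((1 : PermMatrix n) - Dmat n q k * twistMat n q g).det =
      ∏ T ∈ powersetCard m univ,
        (1 - sigmaT q T) ^ (factorial (m - 2) * m * factorial (n - m)) := by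
  have hval := val_finSucc hk
  have hkb := hg.le
  have hlt : k < finSucc k := by grind
  obtain ⟨r, rfl⟩ : ∃ r, m = r + 1 := ⟨m - 1, by grind⟩
  have hcard : #(Icc (finSucc k) b) = r := by
    rw [Fin.card_Icc]; omega
  rw [Dmat_mul_twistMat q hlt hg, det_one_sub_weightedPermMatrix_mulRight q
    hg.isCycleOn.inv (fun i hi => inv_eq_iff_eq.2 (hg.2.2 i (by simpa using hi)).symm)
    (right_mem_Icc.2 hg.le) (by simp [hlt]), hcard]
  simp only [sigmaT_eq_prod_offDiag, Fintype.card_fin, Nat.reduceSubDiff]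

end TCycle

theorem det_list_prod_Ioi {n : ℕ} {ι R : Type*} [Fintype ι] [DecidableEq ι] [CommRing R]
    (a : Fin n) (A : Fin n → Matrix ι ι R) :
    ((((List.finRange n).filter fun m => decide (a < m)).reverse.map A).prod).det =
      ∏ m ∈ Ioi a, (A m).det := by
  have hnd : ((List.finRange n).filter fun m => decide (a < m)).reverse.Nodup :=
    List.nodup_reverse.2 ((List.nodup_finRange n).filter _)
  rw [← Matrix.coe_detMonoidHom, map_list_prod, List.map_map, ← List.prod_toFinset _ hnd]
  refine prod_congr ?_ fun _ _ => rfl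
  ext m
  simp

theorem prod_Ici_finSucc {M : Type*} [CommMonoid M] {n : ℕ} {k : Fin n} (hk : (k : ℕ) + 1 < n)
    (f : ℕ → M) : ∏ b ∈ Ici (finSucc k), f (b - k + 1) = ∏ m ∈ Icc 2 (n - k), f m := by
  have hval : ∏ b ∈ Ici (finSucc k), f (b - k + 1) = ∏ b ∈ Ico (k + 1 : ℕ) n, f (b - k + 1) := by
    rw [← val_finSucc hk, ← Fin.map_valEmbedding_Ici, prod_map]
    rfl
  rw [hval]
  refine prod_nbij' (fun b => b - k + 1) (fun m => m + k - 1) ?_ ?_ ?_ ?_ fun _ _ => rfl <;> grind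

/-- For `1 ≤ k ≤ n−1`, the determinant of the ordered product
`D_{Q,n−k+1} = (I − D_k·M_q(t_{n,k+1})) ⋯ (I − D_k·M_q(t_{k+2,k+1})) · (I − D_k)`
factors as `∏_{m=2}^{n−k+1} ∏_T (1 − σ_T)^{(m−2)!·m·(n−m)!}`, the inner product being
over all subsets `T ⊆ Fin n` of cardinality `m`. -/
theorem det_D_factorization (n : ℕ) (hn : 1 ≤ n) (q : Fin n → Fin n → ℂ)
    (t : Fin n → Fin n → Equiv.Perm (Fin n))
    (ht : ∀ a b : Fin n, a ≤ b → IsTCycle a b (t b a))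
    (k : Fin n) (hk : (k : ℕ) + 1 < n) :
    (((((List.finRange n).filter fun m => decide (finSucc k < m)).reverse.map
        fun m => (1 : PermMatrix n) - Dmat n q k * twistMat n q (t m (finSucc k))).prod) *
      ((1 : PermMatrix n) - Dmat n q k)).det =
      ∏ m ∈ Finset.Icc 2 (n - (k : ℕ)),
        ∏ T ∈ Finset.powersetCard m (Finset.univ : Finset (Fin n)),
          (1 - sigmaT q T) ^ (Nat.factorial (m - 2) * m * Nat.factorial (n - m)) := by
  have hlast : (1 : PermMatrix n) - Dmat n q k =
      1 - Dmat n q k * twistMat n q (t (finSucc k) (finSucc k)) := by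
    rw [(ht _ _ le_rfl).eq_one, twistMat_one, mul_one]
  have hval := val_finSucc hk
  rw [Matrix.det_mul, det_list_prod_Ioi, hlast, prod_Ioi_mul_eq_prod_Ici
    (f := fun b => (1 - Dmat n q k * twistMat n q (t b (finSucc k))).det), ← prod_Ici_finSucc hk]
  refine prod_congr rfl fun b hb => ?_
  have hkb : finSucc k ≤ b := mem_Ici.1 hb
  exact det_one_sub_Dmat_mul_twistMat q hk (ht _ _ hkb) (by grind)
end

section
/- The determinant of the matrix A_Q := ∑_{g∈S_n} M_q(g) factors as det A_Q = ∏_{m=2}^{n} ∏_{T} (1 − σ_T)^{(m−2)!·(n−m+1)!}, where the inner product runs over all subsets T ⊆ Fin n of cardinality m. -/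
/-!
Write `M g` for the matrix of `g` and `t p k` for the cycle `p ↦ p + 1 ↦ ⋯ ↦ k ↦ p`. Every
permutation fixing the letters beyond `k` is uniquely `t p k * h` with `h` fixing `k` as well, and
multiplying by `t p k` undoes no inversion of `h`; hence `∑ g, M g` is the product over `k` of the
sums `∑ p ≤ k, M (t p k)`. Such a sum is peeled off one term at a time by the identity
`(1 - M (t a k)) * ∑ a ≤ p ≤ k, M (t p k) = (∑ a < p ≤ k, M (t p k)) * (1 - M (t a b) * M s ^ 2)`,
where `b = k - 1` and `s` is the transposition of `b` and `k`. The first and last factors are both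
`1 - W` with `W` a weighted right translation by a cycle. This matrix is block diagonal along the
left cosets of the group generated by the cycle, and each block has determinant `1 - σ_T`, where `T`
is an image of the interval `[a, k]`. The factors `1 - σ_T` can be cancelled when the parameters
are indeterminates over `ℤ`, and the resulting identity specialises to any commutative ring.
-/

section

open Equiv Finset
open scoped Pointwise Nat nonZeroDivisors

section WeightedCycle

variable {X R : Type*}

lemma eq_one_or_eq_of_isCycleOn [Finite X] {π σ : Perm X} (hπ : π.IsCycleOn Set.univ)
    (hσ : ∀ x, σ x = x ∨ σ x = π x) : σ = 1 ∨ σ = π := by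
  by_cases hfix : ∀ x, σ x = x
  · exact .inl (Perm.ext hfix)
  obtain ⟨x, hx⟩ := not_forall.1 hfix
  have agree : ∀ i : ℕ, σ ((π ^ i) x) = π ((π ^ i) x) := by
    intro i
    induction i with
    | zero => exact (hσ x).resolve_left hx
    | succ i ih =>
      rw [pow_succ', Perm.mul_apply]
      rcases hσ (π ((π ^ i) x)) with hfixed | hmoved
      · have hpt : π ((π ^ i) x) = (π ^ i) x := σ.injective (hfixed.trans ih.symm)
        rw [hpt, ih]
      · exact hmoved
  refine .inr (Perm.ext fun y => ?_)
  obtain ⟨i, rfl⟩ := hπ.exists_pow_eq' Set.finite_univ (Set.mem_univ x) (Set.mem_univ y)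
  exact agree i

variable [Fintype X] [DecidableEq X] [CommRing R]

lemma sign_of_isCycleOn_univ [Nontrivial X] {π : Perm X} (hπ : π.IsCycleOn Set.univ) :
    Perm.sign π = -(-1) ^ Fintype.card X := by
  have moves : ∀ x, π x ≠ x := fun x => hπ.apply_ne Set.nontrivial_univ (Set.mem_univ x)
  have hcycle : π.IsCycle :=
    Perm.isCycle_iff_exists_isCycleOn.2 ⟨_, Set.nontrivial_univ, hπ, fun _ _ => Set.mem_univ _⟩
  have hsupp : π.support = univ := by ext x; simp [moves x]
  rw [hcycle.sign, hsupp, card_univ]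

lemma det_one_sub_diagonal_mul_permMatrix [Nonempty X] {π : Perm X}
    (hπ : π.IsCycleOn Set.univ) (f : X → R) :
    (1 - Matrix.diagonal f * π.permMatrix R).det = 1 - ∏ x, f x := by
  rcases subsingleton_or_nontrivial X with _ | _
  · obtain ⟨x⟩ := ‹Nonempty X›
    have := uniqueOfSubsingleton x
    simp [Matrix.det_unique, Perm.permMatrix, PEquiv.toMatrix_apply, Subsingleton.elim (π x) x,
      Subsingleton.elim default x]
  have moves : ∀ x, π x ≠ x := fun x => hπ.apply_ne Set.nontrivial_univ (Set.mem_univ x)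
  have entry : ∀ x y, (1 - Matrix.diagonal f * π.permMatrix R) x y =
      (if x = y then 1 else 0) - if π x = y then f x else 0 := by
    simp [Matrix.one_apply, Perm.permMatrix, PEquiv.toMatrix_apply, eq_comm]
  -- Only the identity and `π` contribute to the Leibniz expansion.
  rw [← Matrix.det_transpose, Matrix.det_apply']
  simp only [Matrix.transpose_apply, entry]
  rw [sum_eq_add_of_mem 1 π (mem_univ _) (mem_univ _) (fun h => moves (Classical.arbitrary X) (by
    rw [← h, Perm.one_apply]))]
  · have hsign : ((-1 : R) ^ Fintype.card X) * (-1 : R) ^ Fintype.card X = 1 := by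
      rw [← mul_pow, neg_one_mul, neg_neg, one_pow]
    simp [sign_of_isCycleOn_univ hπ, moves, (moves _).symm, prod_neg, ← mul_assoc, hsign,
      sub_eq_add_neg]
  · rintro σ - ⟨hone, hπ'⟩
    obtain ⟨x, hx⟩ : ∃ x, ¬(σ x = x ∨ σ x = π x) := by
      by_contra! h
      exact (eq_one_or_eq_of_isCycleOn hπ h).elim hone hπ'
    rw [not_or] at hx
    rw [prod_eq_zero (mem_univ x) (by simp [Ne.symm hx.1, Ne.symm hx.2]), mul_zero]

end WeightedCycle

section Counting

variable {G : Type*} [Group G] [Fintype G]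

lemma card_filter_smul_eq_mul_card {X : Type*} [Fintype X] [DecidableEq X] [MulAction G X]
    [MulAction.IsPretransitive G X] (x y : X) :
    #{g : G | g • x = y} * Fintype.card X = Fintype.card G := by
  obtain ⟨π, rfl⟩ := MulAction.exists_smul_eq G x y
  have hcoset : #{g : G | g • x = π • x} = Nat.card (MulAction.stabilizer G x) := by
    rw [Nat.card_eq_fintype_card, Fintype.card_subtype]
    refine card_equiv (Equiv.mulLeft π⁻¹) fun g => ?_
    simp [mul_smul, inv_smul_eq_iff]
  rw [hcoset, ← Nat.card_eq_fintype_card, ← MulAction.index_stabilizer_of_transitive G x,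
    Subgroup.card_mul_index, Nat.card_eq_fintype_card]

lemma card_filter_transversal_mul_orderOf {X : Type*} [DecidableEq X] [MulAction G X] {g : G}
    {S : Set G} [Fintype S] (hS : Subgroup.IsComplement S (Subgroup.zpowers g : Set G))
    {x : X} (hgx : g • x = x) (y : X) :
    #{s : S | (s : G) • x = y} * orderOf g = #{τ : G | τ • x = y} := by
  classical
  have hstab : ∀ h : Subgroup.zpowers g, (h : G) • x = x := fun h =>
    (Subgroup.zpowers_le (H := MulAction.stabilizer G x)).2 hgx h.2
  rw [← Fintype.card_zpowers, ← card_univ, ← card_product]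
  refine card_equiv (Equiv.ofBijective _ hS) fun p => ?_
  simp [mul_smul, hstab]

end Counting

section WeightedTranslation

variable {G R : Type*} [Group G] [Fintype G] [DecidableEq G] [CommRing R]

/-- The permutation matrix of right translation by `g`, with the row of `σ` multiplied by `f σ`: its
`(σ, σ * g)`-entry is `f σ`, and all other entries of that row vanish. -/
def weightedTranslation (f : G → R) (g : G) : Matrix G G R :=
  Matrix.diagonal f * (Equiv.mulRight g).permMatrix R

lemma weightedTranslation_apply (f : G → R) (g σ τ : G) :
    weightedTranslation f g σ τ = if σ * g = τ then f σ else 0 := by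
  simp [weightedTranslation, PEquiv.toMatrix_apply, eq_comm]

lemma weightedTranslation_mul (f f' : G → R) (g g' : G) :
    weightedTranslation f g * weightedTranslation f' g' =
      weightedTranslation (fun σ => f σ * f' (σ * g)) (g * g') := by
  ext σ τ
  rw [Matrix.mul_apply, sum_eq_single (σ * g)]
  · simp [weightedTranslation_apply, mul_assoc]
  · intro ρ _ hρ
    simp [weightedTranslation_apply, hρ.symm]
  · simp

lemma isCycleOn_mulRight {C : Type*} [Group C] {g : C} (hg : Subgroup.zpowers g = ⊤) :
    (Equiv.mulRight g).IsCycleOn Set.univ := by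
  refine ⟨Set.bijOn_univ.2 (Equiv.bijective _), fun x _ y _ => ?_⟩
  obtain ⟨i, hi⟩ : x⁻¹ * y ∈ Subgroup.zpowers g := hg ▸ Subgroup.mem_top _
  exact ⟨i, by simp [hi]⟩

lemma det_one_sub_weightedTranslation (f : G → R) (g : G) {S : Set G} [Fintype S]
    [Fintype (Subgroup.zpowers g)] (hS : Subgroup.IsComplement S (Subgroup.zpowers g : Set G)) :
    (1 - weightedTranslation f g).det =
      ∏ s : S, (1 - ∏ h : Subgroup.zpowers g, f (s * h)) := by
  let g₀ : Subgroup.zpowers g := ⟨g, Subgroup.mem_zpowers g⟩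
  let e : Subgroup.zpowers g × S ≃ G := (Equiv.prodComm _ _).trans (Equiv.ofBijective _ hS)
  have he : ∀ h s, e (h, s) = s * h := fun _ _ => rfl
  have hblock : (1 - weightedTranslation f g).submatrix e e = Matrix.blockDiagonal fun s : S =>
      1 - Matrix.diagonal (fun h : Subgroup.zpowers g => f (s * h)) *
        (Equiv.mulRight g₀).permMatrix R := by
    ext ⟨h, s⟩ ⟨h', s'⟩
    have htranslate : e (h, s) * g = e (h * g₀, s) := by
      simp only [he, Subgroup.coe_mul, mul_assoc, g₀]
    simp only [Matrix.blockDiagonal_apply, Matrix.submatrix_apply, Matrix.sub_apply,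
      Matrix.one_apply, weightedTranslation_apply, htranslate, e.injective.eq_iff, Prod.mk.injEq]
    by_cases hs : s = s' <;> simp [hs, he, PEquiv.toMatrix_apply, eq_comm]
  have hgen : Subgroup.zpowers g₀ = ⊤ := by
    refine (Subgroup.eq_top_iff' _).2 fun ⟨_, i, hi⟩ => ⟨i, Subtype.ext ?_⟩
    simpa [g₀] using hi
  rw [← Matrix.det_submatrix_equiv_self e, hblock, Matrix.det_blockDiagonal]
  exact prod_congr rfl fun s _ =>
    det_one_sub_diagonal_mul_permMatrix (isCycleOn_mulRight hgen) _

lemma det_one_sub_weightedTranslation_eq_prod_pow {X : Type*} [Fintype X] [MulAction G X]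
    [MulAction.IsPretransitive G X] {f : G → R} {g : G} [Fintype (Subgroup.zpowers g)] {x : X}
    (hgx : g • x = x) {F : X → R} (hF : ∀ σ, ∏ h : Subgroup.zpowers g, f (σ * h) = F (σ • x))
    {N : ℕ} (hN : N * orderOf g * Fintype.card X = Fintype.card G) :
    (1 - weightedTranslation f g).det = (∏ y, (1 - F y)) ^ N := by
  classical
  obtain ⟨S, hS, -⟩ := Subgroup.exists_isComplement_left (Subgroup.zpowers g) 1
  have := Fintype.ofFinite S
  have hcard : ∀ y, #{s : S | (s : G) • x = y} = N := fun y => by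
    have := (Fintype.card_pos_iff.2 ⟨x⟩ : 0 < Fintype.card X)
    have h := card_filter_smul_eq_mul_card (G := G) x y
    rw [← card_filter_transversal_mul_orderOf hS hgx, ← hN] at h
    exact Nat.eq_of_mul_eq_mul_right (orderOf_pos g) (Nat.eq_of_mul_eq_mul_right this h)
  rw [det_one_sub_weightedTranslation f g hS, ← prod_pow]
  simp only [hF]
  rw [← prod_fiberwise' univ (fun s : S => (s : G) • x) (fun y => 1 - F y)]
  simp [hcard]

end WeightedTranslation

section Orbit

variable {α M : Type*} [CommMonoid M]

lemma bijOn_zpowers_of_isCycleOn {g : Perm α} {s : Set α} (hg : g.IsCycleOn s)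
    (hfix : ∀ x ∉ s, g x = x) {a : α} (ha : a ∈ s) :
    Set.BijOn (fun h : Perm α => h a) (Subgroup.zpowers g) s := by
  refine ⟨?_, ?_, fun y hy => ?_⟩
  · rintro _ ⟨i, rfl⟩
    exact (hg.1.perm_zpow i).mapsTo ha
  · rintro _ ⟨i, rfl⟩ _ ⟨j, rfl⟩ hij
    ext x
    by_cases hx : x ∈ s
    · obtain ⟨k, rfl⟩ := hg.2 ha hx
      dsimp only at hij ⊢
      rw [← Perm.mul_apply, ← Perm.mul_apply, (Commute.zpow_zpow_self g i k).eq,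
        (Commute.zpow_zpow_self g j k).eq, Perm.mul_apply, Perm.mul_apply, hij]
    · have hx' := hfix x hx
      rw [Perm.zpow_apply_eq_self_of_apply_eq_self hx',
        Perm.zpow_apply_eq_self_of_apply_eq_self hx']
  · obtain ⟨i, hi⟩ := hg.2 ha hy
    exact ⟨g ^ i, ⟨i, rfl⟩, hi⟩

lemma prod_zpowers_of_isCycleOn {g : Perm α} [Fintype (Subgroup.zpowers g)] {s : Finset α}
    (hg : g.IsCycleOn s) (hfix : ∀ x ∉ s, g x = x) {a : α} (ha : a ∈ s) (w : α → M) :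
    ∏ h : Subgroup.zpowers g, w ((h : Perm α) a) = ∏ x ∈ s, w x := by
  have hbij := bijOn_zpowers_of_isCycleOn hg (by simpa using hfix) (by simpa using ha)
  rw [← prod_coe_sort s]
  exact Fintype.prod_equiv (hbij.equiv _) _ _ fun _ => rfl

lemma orderOf_of_isCycleOn {g : Perm α} {s : Finset α} (hg : g.IsCycleOn s)
    (hfix : ∀ x ∉ s, g x = x) (hs : s.Nonempty) : orderOf g = #s := by
  obtain ⟨a, ha⟩ := hs
  have hbij := bijOn_zpowers_of_isCycleOn hg (by simpa using hfix) (by simpa using ha)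
  rw [← Nat.card_zpowers, ← Nat.card_eq_finsetCard]
  exact Nat.card_congr (hbij.equiv _)

lemma smul_eq_self_of_isCycleOn [DecidableEq α] {g : Perm α} {s A : Finset α} (hg : g.IsCycleOn s)
    (hfix : ∀ x ∉ s, g x = x) (hsA : s ⊆ A) : g • A = A := by
  refine eq_of_subset_of_card_le (fun y hy => ?_) (card_smul_finset g A).ge
  obtain ⟨x, hx, rfl⟩ := mem_smul_finset.1 hy
  by_cases hxs : x ∈ s
  · exact hsA (hg.1.mapsTo hxs)
  · rwa [Perm.smul_def, hfix x hxs]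

end Orbit

section CycleIcc

variable {n : ℕ}

lemma val_cycleIcc_apply {i j : Fin n} (hij : i ≤ j) (x : Fin n) :
    (Fin.cycleIcc i j x : ℕ) = if i ≤ x ∧ x ≤ j then if x = j then (i : ℕ) else x + 1 else x := by
  have : NeZero n := ⟨x.pos.ne'⟩
  split_ifs with hx hxj
  · rw [hxj, Fin.cycleIcc_of_last hij]
  · rw [Fin.cycleIcc_of_ge_of_lt hx.1 (lt_of_le_of_ne hx.2 hxj)]
    have : x < j := lt_of_le_of_ne hx.2 hxj
    exact Fin.val_add_one_of_lt' (by omega)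
  · rcases not_and_or.1 hx with h | h
    · rw [Fin.cycleIcc_of_lt (not_le.1 h)]
    · rw [Fin.cycleIcc_of_gt (not_le.1 h)]

lemma isCycleOn_cycleIcc {i j : Fin n} (hij : i ≤ j) :
    (Fin.cycleIcc i j).IsCycleOn (Icc i j) := by
  have : NeZero n := ⟨i.pos.ne'⟩
  rcases hij.eq_or_lt with rfl | hlt
  · rw [Fin.cycleIcc_eq]
    simp
  · convert (Fin.isCycle_cycleIcc hlt).isCycleOn using 1
    ext x
    have h := val_cycleIcc_apply hij x
    simp only [coe_Icc, Set.mem_Icc, Set.mem_ofPred_eq, ne_eq, Fin.ext_iff, h]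
    split_ifs <;> grind

lemma cycleIcc_apply_of_notMem {i j x : Fin n} (hx : x ∉ Icc i j) :
    Fin.cycleIcc i j x = x := by
  rw [mem_Icc, not_and_or, not_le, not_le] at hx
  exact hx.elim Fin.cycleIcc_of_lt Fin.cycleIcc_of_gt

end CycleIcc

section PairProd

variable {α R : Type*} [DecidableEq α] [CommRing R]

/-- The product `σ_T` of `q x y` over all ordered pairs of distinct elements of `T`. -/
def pairProd (q : α → α → R) (T : Finset α) : R :=
  ∏ p ∈ T.offDiag, q p.1 p.2

lemma pairProd_eq_prod_prod_erase (q : α → α → R) (T : Finset α) :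
    pairProd q T = ∏ x ∈ T, ∏ y ∈ T.erase x, q x y := by
  refine prod_finset_product' _ _ _ fun p => ?_
  rw [mem_offDiag, mem_erase]
  tauto

lemma pairProd_smul (q : α → α → R) (σ : Perm α) (A : Finset α) :
    pairProd q (σ • A) = ∏ x ∈ A, ∏ y ∈ (σ • A).erase (σ x), q (σ x) y := by
  rw [pairProd_eq_prod_prod_erase]
  exact prod_image σ.injective.injOn

lemma prod_zpowers_prod_smul_erase {g : Perm α} [Fintype (Subgroup.zpowers g)] {s A : Finset α}
    (hg : g.IsCycleOn s) (hfix : ∀ x ∉ s, g x = x) (hsA : s ⊆ A) {a : α} (ha : a ∈ s)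
    (q : α → α → R) (σ : Perm α) :
    ∏ h : Subgroup.zpowers g, ∏ y ∈ ((σ * h : Perm α) • A).erase ((σ * h : Perm α) a),
      q ((σ * h : Perm α) a) y = ∏ x ∈ s, ∏ y ∈ (σ • A).erase (σ x), q (σ x) y := by
  have hstab : ∀ h : Subgroup.zpowers g, (h : Perm α) • A = A := fun h =>
    (Subgroup.zpowers_le (H := MulAction.stabilizer (Perm α) A)).2
      (smul_eq_self_of_isCycleOn hg hfix hsA) h.2
  simp only [mul_smul, hstab, Perm.mul_apply]
  exact prod_zpowers_of_isCycleOn hg hfix ha fun x => ∏ y ∈ (σ • A).erase (σ x), q (σ x) y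

variable [Fintype α]

/-- The product of `1 - σ_T` over all `T` of cardinality `m`: in the determinants of
interest all sets of one size have the same exponent. -/
def levelProd (q : α → α → R) (m : ℕ) : R :=
  ∏ T ∈ powersetCard m univ, (1 - pairProd q T)

lemma det_one_sub_weightedTranslation_perm {q : α → α → R} {f : Perm α → R} {g : Perm α}
    [Fintype (Subgroup.zpowers g)] {A : Finset α} (hgA : g • A = A)
    (hf : ∀ σ, ∏ h : Subgroup.zpowers g, f (σ * h) = pairProd q (σ • A)) {N : ℕ}
    (hN : N * orderOf g = (#A)! * (Fintype.card α - #A)!) :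
    (1 - weightedTranslation f g).det = levelProd q #A ^ N := by
  have : MulAction.IsPretransitive (Perm α) (Set.powersetCard α #A) :=
    Set.powersetCard.isPretransitive
  have := Fintype.ofFinite (Set.powersetCard α #A)
  have hcard : Fintype.card (Set.powersetCard α #A) = (Fintype.card α).choose #A := by
    rw [← Nat.card_eq_fintype_card, Set.powersetCard.card, Nat.card_eq_fintype_card]
  have hlevel : levelProd q #A = ∏ T : Set.powersetCard α #A, (1 - pairProd q T) :=
    prod_subtype _ (by simp [Set.powersetCard.mem_iff]) _
  rw [hlevel]
  refine det_one_sub_weightedTranslation_eq_prod_pow (x := (⟨A, rfl⟩ : Set.powersetCard α #A))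
    (Subtype.ext hgA) (F := fun T => pairProd q T) hf ?_
  rw [hN, hcard, Fintype.card_perm, mul_comm, ← mul_assoc,
    Nat.choose_mul_factorial_mul_factorial (card_le_univ A)]

end PairProd

section TwistWeight

variable {n : ℕ} {R : Type*} [CommRing R]

/-- The entry of `M_q(g)` in row `σ` and column `σ * g`, the only one in its row that need not
vanish. -/
def twistWeight (q : Fin n → Fin n → R) (g σ : Perm (Fin n)) : R :=
  ∏ p ∈ invSet g, q (σ (g p.2)) (σ (g p.1))

/-- The matrix `M_q(g)` over a commutative ring. Its entries are indexed by their row `σ` instead of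
their column `τ = σ * g`. -/
def twistMatrix (q : Fin n → Fin n → R) (g : Perm (Fin n)) :
    Matrix (Perm (Fin n)) (Perm (Fin n)) R :=
  weightedTranslation (twistWeight q g) g

lemma twistMat_eq_twistMatrix (q : Fin n → Fin n → ℂ) (g : Perm (Fin n)) :
    twistMat n q g = twistMatrix q g := by
  ext σ τ
  rw [twistMatrix, weightedTranslation_apply, twistMat]
  refine if_ctx_congr eq_mul_inv_iff_mul_eq (fun h => ?_) fun _ => rfl
  simp only [twistWeight, ← h, Perm.mul_apply]

lemma sigmaT_eq_pairProd (q : Fin n → Fin n → ℂ) (A : Finset (Fin n)) :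
    sigmaT q A = pairProd q A := by
  refine prod_congr (Finset.ext fun p => ?_) fun _ _ => rfl
  rw [mem_filter, mem_product, mem_offDiag, and_assoc]

lemma invSet_cycleIcc {p k : Fin n} (hpk : p ≤ k) :
    invSet (Fin.cycleIcc p k) = Ico p k ×ˢ {k} := by
  ext ⟨x, y⟩
  have hx := val_cycleIcc_apply hpk x
  have hy := val_cycleIcc_apply hpk y
  simp only [invSet, mem_filter, mem_univ, true_and, mem_product, mem_Ico, mem_singleton]
  grind

lemma twistWeight_cycleIcc (q : Fin n → Fin n → R) {p k : Fin n} (hpk : p ≤ k)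
    (σ : Perm (Fin n)) :
    twistWeight q (Fin.cycleIcc p k) σ = ∏ j ∈ Ioc p k, q (σ p) (σ j) := by
  have : NeZero n := ⟨p.pos.ne'⟩
  rw [twistWeight, invSet_cycleIcc hpk, prod_product]
  simp only [prod_singleton, Fin.cycleIcc_of_last hpk]
  refine prod_equiv (Fin.cycleIcc p k) (fun x => ?_) fun _ _ => rfl
  have hx := val_cycleIcc_apply hpk x
  rw [mem_Ico, mem_Ioc]
  grind

lemma twistWeight_cycleIcc_eq_prod_erase (q : Fin n → Fin n → R) {p k : Fin n} (hpk : p ≤ k)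
    (σ : Perm (Fin n)) : twistWeight q (Fin.cycleIcc p k) σ =
      ∏ y ∈ (σ • Icc p k).erase (σ p), q (σ p) y := by
  have himage : (σ • Icc p k).erase (σ p) = (Ioc p k).image σ := by
    rw [← Icc_erase_left]
    exact (image_erase σ.injective _ _).symm
  rw [himage, prod_image σ.injective.injOn, twistWeight_cycleIcc q hpk]

lemma det_one_sub_twistMatrix_cycleIcc (q : Fin n → Fin n → R) {a k : Fin n} {d : ℕ}
    (hd : (a : ℕ) + (d + 1) = k) :
    (1 - twistMatrix q (Fin.cycleIcc a k)).det =
      levelProd q (d + 2) ^ ((d + 1)! * (n - (d + 2))!) := by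
  have hak : a ≤ k := by omega
  have hcycle := isCycleOn_cycleIcc hak
  have hfix := fun x => cycleIcc_apply_of_notMem (i := a) (j := k) (x := x)
  have hcard : #(Icc a k) = d + 2 := by rw [Fin.card_Icc]; omega
  rw [← hcard]
  refine det_one_sub_weightedTranslation_perm
    (smul_eq_self_of_isCycleOn hcycle hfix Subset.rfl) (fun σ => ?_) ?_
  · simp only [twistWeight_cycleIcc_eq_prod_erase q hak]
    rw [prod_zpowers_prod_smul_erase hcycle hfix Subset.rfl (left_mem_Icc.2 hak), pairProd_smul]
  · rw [orderOf_of_isCycleOn hcycle hfix (nonempty_Icc.2 hak), hcard, Fintype.card_fin,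
      Nat.factorial_succ (d + 1)]
    ring

/-- The entry of `M_q(t) * M_q(s) ^ 2` in row `σ` and column `σ * t`, where `s` exchanges `k` with
its predecessor `b` and `t` is the cycle `a ↦ a + 1 ↦ ⋯ ↦ b ↦ a`. -/
def correctionWeight (q : Fin n → Fin n → R) (a k : Fin n) (σ : Perm (Fin n)) : R :=
  q (σ k) (σ a) * ∏ y ∈ (σ • Icc a k).erase (σ a), q (σ a) y

/-- The matrix `M_q(t) * M_q(s) ^ 2` for the cycle `t` of `a ≤ ⋯ ≤ b` and the transposition `s` of
`b` and `k = b + 1`, given directly through its weights. -/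
def correctionMatrix (q : Fin n → Fin n → R) (a b k : Fin n) :
    Matrix (Perm (Fin n)) (Perm (Fin n)) R :=
  weightedTranslation (correctionWeight q a k) (Fin.cycleIcc a b)

lemma prod_zpowers_correctionWeight (q : Fin n → Fin n → R) {a b k : Fin n} (hab : a ≤ b)
    (hbk : (b : ℕ) + 1 = k) (σ : Perm (Fin n)) :
    ∏ h : Subgroup.zpowers (Fin.cycleIcc a b), correctionWeight q a k (σ * h) =
      pairProd q (σ • Icc a k) := by
  have hcycle := isCycleOn_cycleIcc hab
  have hfix := fun x => cycleIcc_apply_of_notMem (i := a) (j := b) (x := x)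
  have ha : a ∈ Icc a b := left_mem_Icc.2 hab
  have hIcc : Icc a b = (Icc a k).erase k := by ext; grind
  have hk : ∀ h : Subgroup.zpowers (Fin.cycleIcc a b), (h : Perm (Fin n)) k = k := fun h =>
    (Subgroup.zpowers_le (H := MulAction.stabilizer (Perm (Fin n)) k)).2
      (hfix k (by simp [hIcc])) h.2
  have himage : (Icc a b).image σ = (σ • Icc a k).erase (σ k) := by
    rw [hIcc]
    exact image_erase σ.injective _ _
  simp only [correctionWeight]
  rw [prod_mul_distrib,
    prod_zpowers_prod_smul_erase hcycle hfix (hIcc ▸ erase_subset _ _) ha, pairProd_smul,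
    ← mul_prod_erase (Icc a k) _ (by grind : k ∈ Icc a k), ← hIcc, ← himage,
    prod_image σ.injective.injOn]
  simp only [Perm.mul_apply, hk]
  rw [prod_zpowers_of_isCycleOn hcycle hfix ha fun x => q (σ k) (σ x)]

lemma det_one_sub_correctionMatrix (q : Fin n → Fin n → R) {a b k : Fin n} {d : ℕ}
    (hd : (a : ℕ) + d = b) (hbk : (b : ℕ) + 1 = k) :
    (1 - correctionMatrix q a b k).det =
      levelProd q (d + 2) ^ ((d + 2) * d ! * (n - (d + 2))!) := by
  have hab : a ≤ b := by omega
  have hcycle := isCycleOn_cycleIcc hab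
  have hfix := fun x => cycleIcc_apply_of_notMem (i := a) (j := b) (x := x)
  have hcard : #(Icc a k) = d + 2 := by rw [Fin.card_Icc]; omega
  have horder : #(Icc a b) = d + 1 := by rw [Fin.card_Icc]; omega
  rw [← hcard]
  refine det_one_sub_weightedTranslation_perm
    (smul_eq_self_of_isCycleOn hcycle hfix (Icc_subset_Icc_right (by omega)))
    (prod_zpowers_correctionWeight q hab hbk) ?_
  rw [orderOf_of_isCycleOn hcycle hfix (nonempty_Icc.2 hab), hcard, horder, Fintype.card_fin,
    Nat.factorial_succ (d + 1), Nat.factorial_succ d]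
  ring

lemma cycleIcc_mul_cycleIcc {a b k x : Fin n} (hbk : (b : ℕ) + 1 = k) (hx : x ∈ Ico a k) :
    Fin.cycleIcc a k * Fin.cycleIcc x k =
      Fin.cycleIcc (Fin.cycleIcc a k x) k * Fin.cycleIcc a b := by
  obtain ⟨hax, hxk⟩ := mem_Ico.1 hx
  ext y
  have hpx := val_cycleIcc_apply (hax.trans hxk.le) x
  have hpk : Fin.cycleIcc a k x ≤ k := by grind
  have hab : a ≤ b := by omega
  generalize Fin.cycleIcc a k x = p at *
  simp only [Perm.mul_apply]
  have hleft_outer := val_cycleIcc_apply (hax.trans hxk.le) (Fin.cycleIcc x k y)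
  have hleft_inner := val_cycleIcc_apply hxk.le y
  have hright_outer := val_cycleIcc_apply hpk (Fin.cycleIcc a b y)
  have hright_inner := val_cycleIcc_apply hab y
  grind

lemma twistWeight_mul_twistWeight_cycleIcc (q : Fin n → Fin n → R) {a k x : Fin n}
    (hx : x ∈ Ico a k) (σ : Perm (Fin n)) :
    twistWeight q (Fin.cycleIcc a k) σ *
        twistWeight q (Fin.cycleIcc x k) (σ * Fin.cycleIcc a k) =
      twistWeight q (Fin.cycleIcc (Fin.cycleIcc a k x) k) σ *
        correctionWeight q a k (σ * Fin.cycleIcc (Fin.cycleIcc a k x) k) := by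
  obtain ⟨hax, hxk⟩ := mem_Ico.1 hx
  have : NeZero n := ⟨x.pos.ne'⟩
  have hak : a ≤ k := hax.trans hxk.le
  have hpx := val_cycleIcc_apply hak x
  have hreindex : ∏ j ∈ Ioc x k, q (σ (Fin.cycleIcc a k x)) (σ (Fin.cycleIcc a k j)) =
      ∏ j ∈ insert a (Ioc (Fin.cycleIcc a k x) k), q (σ (Fin.cycleIcc a k x)) (σ j) := by
    refine prod_equiv (Fin.cycleIcc a k) (fun j => ?_) fun _ _ => rfl
    have hj := val_cycleIcc_apply hak j
    rw [mem_insert, mem_Ioc, mem_Ioc]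
    grind
  generalize hp : Fin.cycleIcc a k x = p at *
  have hap : a < p := by grind
  have hpk : p ≤ k := by grind
  have hfix : Fin.cycleIcc p k • Icc a k = Icc a k :=
    smul_eq_self_of_isCycleOn (isCycleOn_cycleIcc hpk) (fun _ => cycleIcc_apply_of_notMem)
      (Icc_subset_Icc_left hap.le)
  rw [twistWeight_cycleIcc q hxk.le, twistWeight_cycleIcc q hpk, correctionWeight, mul_smul, hfix,
    twistWeight_cycleIcc_eq_prod_erase q hak]
  simp only [Perm.mul_apply, hp, Fin.cycleIcc_of_last hpk, Fin.cycleIcc_of_lt hap]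
  rw [hreindex, prod_insert (by grind)]
  ring

lemma twistMatrix_mul_twistMatrix_cycleIcc (q : Fin n → Fin n → R) {a b k x : Fin n}
    (hbk : (b : ℕ) + 1 = k) (hx : x ∈ Ico a k) :
    twistMatrix q (Fin.cycleIcc a k) * twistMatrix q (Fin.cycleIcc x k) =
      twistMatrix q (Fin.cycleIcc (Fin.cycleIcc a k x) k) * correctionMatrix q a b k := by
  rw [twistMatrix, twistMatrix, twistMatrix, correctionMatrix, weightedTranslation_mul,
    weightedTranslation_mul, cycleIcc_mul_cycleIcc hbk hx]
  exact congrArg (weightedTranslation · _)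
    (funext (twistWeight_mul_twistWeight_cycleIcc q hx))

/-- The sum of the twisted matrices of the cycles `p ↦ p + 1 ↦ ⋯ ↦ k ↦ p` for `a ≤ p ≤ k`. -/
def cycleSum (q : Fin n → Fin n → R) (a k : Fin n) :
    Matrix (Perm (Fin n)) (Perm (Fin n)) R :=
  ∑ p ∈ Icc a k, twistMatrix q (Fin.cycleIcc p k)

lemma twistMatrix_one (q : Fin n → Fin n → R) : twistMatrix q 1 = 1 := by
  have hinv : invSet (1 : Perm (Fin n)) = ∅ := filter_false_of_mem fun p _ h =>
    lt_asymm h.1 h.2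
  ext σ τ
  simp [twistMatrix, weightedTranslation_apply, twistWeight, hinv, Matrix.one_apply]

lemma cycleSum_self (q : Fin n → Fin n → R) (k : Fin n) : cycleSum q k k = 1 := by
  have : NeZero n := ⟨k.pos.ne'⟩
  rw [cycleSum, Icc_self, sum_singleton, Fin.cycleIcc_eq, twistMatrix_one]

lemma one_sub_twistMatrix_mul_cycleSum (q : Fin n → Fin n → R) {a a' b k : Fin n}
    (haa' : (a : ℕ) + 1 = a') (hbk : (b : ℕ) + 1 = k) (hak : a < k) :
    (1 - twistMatrix q (Fin.cycleIcc a k)) * cycleSum q a k =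
      cycleSum q a' k * (1 - correctionMatrix q a b k) := by
  have : NeZero n := ⟨k.pos.ne'⟩
  have hfirst : cycleSum q a k = twistMatrix q (Fin.cycleIcc a k) + cycleSum q a' k := by
    rw [cycleSum, ← add_sum_erase _ _ (left_mem_Icc.2 hak.le)]
    congr 2
    ext; grind
  have hlast : twistMatrix q (Fin.cycleIcc a k) * cycleSum q a k =
      twistMatrix q (Fin.cycleIcc a k) + cycleSum q a' k * correctionMatrix q a b k := by
    rw [cycleSum, ← add_sum_erase _ _ (right_mem_Icc.2 hak.le), Icc_erase_right, mul_add,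
      Fin.cycleIcc_eq, twistMatrix_one, mul_one, mul_sum, cycleSum, sum_mul, add_right_inj]
    refine sum_equiv (Fin.cycleIcc a k) (fun x => ?_) fun x hx =>
      twistMatrix_mul_twistMatrix_cycleIcc q hbk hx
    have hx := val_cycleIcc_apply hak.le x
    rw [mem_Ico, mem_Icc]
    grind
  rw [sub_mul, one_mul, hlast, hfirst]
  noncomm_ring

lemma det_cycleSum_succ_mul (q : Fin n → Fin n → R) {a a' k : Fin n} {d : ℕ}
    (haa' : (a : ℕ) + 1 = a') (hd : (a : ℕ) + (d + 1) = k) :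
    levelProd q (d + 2) ^ ((d + 1)! * (n - (d + 2))!) * (cycleSum q a k).det =
      (cycleSum q a' k).det * levelProd q (d + 2) ^ ((d + 2) * d ! * (n - (d + 2))!) := by
  let b : Fin n := ⟨a + d, by omega⟩
  rw [← det_one_sub_twistMatrix_cycleIcc q hd,
    ← det_one_sub_correctionMatrix q (b := b) rfl hd, ← Matrix.det_mul, ← Matrix.det_mul,
    one_sub_twistMatrix_mul_cycleSum q (b := b) haa' hd (by omega)]

lemma det_cycleSum {q : Fin n → Fin n → R} (hq : ∀ m, 2 ≤ m → levelProd q m ∈ R⁰)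
    {a k : Fin n} {d : ℕ} (hd : (a : ℕ) + d = k) :
    (cycleSum q a k).det = ∏ m ∈ Icc 2 (d + 1), levelProd q m ^ ((m - 2)! * (n - m)!) := by
  induction d generalizing a with
  | zero =>
    obtain rfl : a = k := Fin.ext hd
    simp [cycleSum_self]
  | succ d ih =>
    let a' : Fin n := ⟨a + 1, by omega⟩
    have hstep := det_cycleSum_succ_mul q (a' := a') rfl hd
    have hexp : (d + 2) * d ! * (n - (d + 2))! =
        (d + 1)! * (n - (d + 2))! + d ! * (n - (d + 2))! := by
      rw [Nat.factorial_succ]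
      ring
    rw [ih (a := a') (by simp only [a']; omega), hexp, pow_add] at hstep
    rw [prod_Icc_succ_top (by omega)]
    refine mul_cancel_left_mem_nonZeroDivisors (pow_mem (hq (d + 2) (by omega)) _) |>.1
      (hstep.trans ?_)
    rw [Nat.add_sub_cancel d 2]
    ring

end TwistWeight

section PrefixSum

variable {n : ℕ} {R : Type*} [CommRing R]

lemma twistWeight_mul (q : Fin n → Fin n → R) {g h : Perm (Fin n)}
    (hgh : ∀ a b, a < b → h b < h a → g (h b) < g (h a)) (σ : Perm (Fin n)) :
    twistWeight q (g * h) σ = twistWeight q g σ * twistWeight q h (σ * g) := by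
  have hinv : (invSet (g * h)).filter (fun p => h p.2 < h p.1) = invSet h := by
    rw [invSet, invSet, filter_filter]
    refine filter_congr fun p _ => ?_
    exact ⟨fun hp => ⟨hp.1.1, hp.2⟩, fun hp => ⟨⟨hp.1, hgh _ _ hp.1 hp.2⟩, hp.2⟩⟩
  rw [twistWeight, ← prod_filter_not_mul_prod_filter _ fun p => h p.2 < h p.1, hinv]
  congr 1
  refine prod_equiv (h.prodCongr h) (fun p => ?_) fun _ _ => rfl
  have hne : p.1 < p.2 → h p.1 ≠ h p.2 := fun hp => h.injective.ne hp.ne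
  have hrev := hgh p.2 p.1
  have := lt_trichotomy p.1 p.2
  simp only [invSet, mem_filter, mem_univ, true_and, Perm.mul_apply, prodCongr_apply]
  grind

lemma twistMatrix_mul (q : Fin n → Fin n → R) {g h : Perm (Fin n)}
    (hgh : ∀ a b, a < b → h b < h a → g (h b) < g (h a)) :
    twistMatrix q (g * h) = twistMatrix q g * twistMatrix q h := by
  rw [twistMatrix, twistMatrix, twistMatrix, weightedTranslation_mul]
  exact congrArg (weightedTranslation · _) (funext (twistWeight_mul q hgh))

/-- The permutations moving only the first `k` letters, a copy of `S_k` in `S_n`. -/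
def prefixPerms (n k : ℕ) : Finset (Perm (Fin n)) :=
  {g | ∀ x : Fin n, k ≤ x → g x = x}

lemma mem_prefixPerms {k : ℕ} {g : Perm (Fin n)} :
    g ∈ prefixPerms n k ↔ ∀ x : Fin n, k ≤ x → g x = x :=
  mem_filter_univ g

lemma prefixPerms_zero : prefixPerms n 0 = {1} := by
  ext g
  simp [mem_prefixPerms, Perm.ext_iff]

lemma prefixPerms_self : prefixPerms n n = univ :=
  filter_true_of_mem fun _ _ x hx => absurd x.isLt hx.not_gt

lemma apply_lt_of_mem_prefixPerms {k : ℕ} {h : Perm (Fin n)} (hh : h ∈ prefixPerms n k)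
    {x : Fin n} (hx : x < k) : h x < k := by
  by_contra! hk
  have hfixed : h x = x := h.injective (mem_prefixPerms.1 hh _ hk)
  omega

lemma cycleIcc_mul_mem_prefixPerms {p k : Fin n} {h : Perm (Fin n)} (hh : h ∈ prefixPerms n k) :
    Fin.cycleIcc p k * h ∈ prefixPerms n (k + 1) :=
  mem_prefixPerms.2 fun x hx => by
    rw [Perm.mul_apply, mem_prefixPerms.1 hh x (by omega), Fin.cycleIcc_of_gt (by omega)]

lemma apply_le_of_mem_prefixPerms_succ {k : Fin n} {g : Perm (Fin n)}
    (hg : g ∈ prefixPerms n (k + 1)) : g k ≤ k :=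
  Nat.lt_succ_iff.1 (apply_lt_of_mem_prefixPerms hg k.val.lt_succ_self)

lemma inv_cycleIcc_mul_mem_prefixPerms {k : Fin n} {g : Perm (Fin n)}
    (hg : g ∈ prefixPerms n (k + 1)) : (Fin.cycleIcc (g k) k)⁻¹ * g ∈ prefixPerms n k := by
  have : NeZero n := ⟨k.pos.ne'⟩
  refine mem_prefixPerms.2 fun x hx => ?_
  rw [Perm.mul_apply, Perm.inv_eq_iff_eq]
  rcases hx.eq_or_lt with hkx | hkx
  · rw [← Fin.ext hkx, Fin.cycleIcc_of_last (apply_le_of_mem_prefixPerms_succ hg)]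
  · rw [mem_prefixPerms.1 hg x hkx, Fin.cycleIcc_of_gt hkx]

lemma twistMatrix_cycleIcc_mul (q : Fin n → Fin n → R) {p k : Fin n} (hpk : p ≤ k)
    {h : Perm (Fin n)} (hh : h ∈ prefixPerms n k) :
    twistMatrix q (Fin.cycleIcc p k * h) =
      twistMatrix q (Fin.cycleIcc p k) * twistMatrix q h := by
  refine twistMatrix_mul q fun a b hab hba => ?_
  have hmaps := fun x : Fin n => apply_lt_of_mem_prefixPerms (x := x) hh
  have hbk : b < k := by
    by_contra! hkb
    have hb := mem_prefixPerms.1 hh b hkb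
    have ha := mem_prefixPerms.1 hh a
    have hak := hmaps a
    omega
  have hhb := hmaps b hbk
  have hha := hmaps a (hab.trans hbk)
  have hca := val_cycleIcc_apply hpk (h a)
  have hcb := val_cycleIcc_apply hpk (h b)
  grind

/-- The partial sum of the twisted matrices over the copy of `S_k` in `S_n`. -/
def prefixSum (q : Fin n → Fin n → R) (k : ℕ) : Matrix (Perm (Fin n)) (Perm (Fin n)) R :=
  ∑ g ∈ prefixPerms n k, twistMatrix q g

lemma prefixSum_zero (q : Fin n → Fin n → R) : prefixSum q 0 = 1 := by
  rw [prefixSum, prefixPerms_zero, sum_singleton, twistMatrix_one]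

lemma prefixSum_self (q : Fin n → Fin n → R) : prefixSum q n = ∑ g, twistMatrix q g := by
  rw [prefixSum, prefixPerms_self]

lemma prefixSum_succ (q : Fin n → Fin n → R) (k : Fin n) :
    prefixSum q (k + 1) = cycleSum q ⟨0, k.pos⟩ k * prefixSum q k := by
  have : NeZero n := ⟨k.pos.ne'⟩
  have hpair : ∀ p ∈ Icc ⟨0, k.pos⟩ k ×ˢ prefixPerms n k, p.1 ≤ k ∧ p.2 ∈ prefixPerms n k :=
    fun p hp => ⟨(mem_Icc.1 (mem_product.1 hp).1).2, (mem_product.1 hp).2⟩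
  rw [prefixSum, prefixSum, cycleSum, sum_mul_sum, ← sum_product']
  symm
  refine sum_bij' (fun p _ => Fin.cycleIcc p.1 k * p.2)
    (fun g _ => (g k, (Fin.cycleIcc (g k) k)⁻¹ * g))
    (fun p hp => cycleIcc_mul_mem_prefixPerms (hpair p hp).2) (fun g hg => ?_)
    (fun p hp => ?_) (fun g _ => mul_inv_cancel_left _ g)
    fun p hp => (twistMatrix_cycleIcc_mul q (hpair p hp).1 (hpair p hp).2).symm
  · exact mem_product.2 ⟨mem_Icc.2 ⟨Nat.zero_le _, apply_le_of_mem_prefixPerms_succ hg⟩,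
      inv_cycleIcc_mul_mem_prefixPerms hg⟩
  · have hk : (Fin.cycleIcc p.1 k * p.2) k = p.1 := by
      rw [Perm.mul_apply, mem_prefixPerms.1 (hpair p hp).2 k le_rfl,
        Fin.cycleIcc_of_last (hpair p hp).1]
    simp only [hk, inv_mul_cancel_left]

lemma det_prefixSum {q : Fin n → Fin n → R} (hq : ∀ m, 2 ≤ m → levelProd q m ∈ R⁰)
    {k : ℕ} (hk : k ≤ n) : (prefixSum q k).det =
      ∏ m ∈ Icc 2 k, levelProd q m ^ ((m - 2)! * (n - m)! * (k + 1 - m)) := by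
  induction k with
  | zero => simp [prefixSum_zero]
  | succ k ih =>
    have hcycle := det_cycleSum hq (a := ⟨0, by omega⟩) (k := ⟨k, hk⟩) (Nat.zero_add k)
    rw [prefixSum_succ q ⟨k, hk⟩, Matrix.det_mul, hcycle, ih (by omega)]
    have hextend : ∏ m ∈ Icc 2 k, levelProd q m ^ ((m - 2)! * (n - m)! * (k + 1 - m)) =
        ∏ m ∈ Icc 2 (k + 1), levelProd q m ^ ((m - 2)! * (n - m)! * (k + 1 - m)) :=
      prod_subset (Icc_subset_Icc_right (by omega)) fun m hm hm' => by
        have : k + 1 - m = 0 := by grind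
        simp [this]
    rw [hextend, ← prod_mul_distrib]
    refine prod_congr rfl fun m hm => ?_
    have : k + 1 + 1 - m = 1 + (k + 1 - m) := by grind
    rw [this, ← pow_add]
    ring

end PrefixSum

section Specialization

variable {α R S : Type*} [CommRing R] [CommRing S]

lemma map_pairProd (f : R →+* S) (q : α → α → R) (T : Finset α) :
    f (pairProd q T) = pairProd (fun i j => f (q i j)) T :=
  map_prod f _ _

lemma map_levelProd [Fintype α] (f : R →+* S) (q : α → α → R) (m : ℕ) :
    f (levelProd q m) = levelProd (fun i j => f (q i j)) m := by
  simp only [levelProd, map_prod, map_sub, map_one, map_pairProd]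

lemma map_twistMatrix {n : ℕ} (f : R →+* S) (q : Fin n → Fin n → R) (g : Perm (Fin n)) :
    f.mapMatrix (twistMatrix q g) = twistMatrix (fun i j => f (q i j)) g := by
  ext σ τ
  simp [twistMatrix, weightedTranslation_apply, twistWeight, apply_ite f]

/-- The universal parameter family: one indeterminate over `ℤ` for each ordered pair. -/
noncomputable def genericParam (α : Type*) (i j : α) : MvPolynomial (α × α) ℤ :=
  MvPolynomial.X (i, j)

lemma levelProd_genericParam_mem_nonZeroDivisors [Fintype α] {m : ℕ} (hm : 2 ≤ m) :
    levelProd (genericParam α) m ∈ (MvPolynomial (α × α) ℤ)⁰ := by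
  refine mem_nonZeroDivisors_of_ne_zero fun h => ?_
  have heval := map_levelProd (MvPolynomial.constantCoeff (σ := α × α) (R := ℤ)) (genericParam α) m
  have hpair : ∀ T ∈ powersetCard m (univ : Finset α), pairProd (fun _ _ : α => (0 : ℤ)) T = 0 := by
    intro T hT
    obtain ⟨x, hx, y, hy, hxy⟩ := one_lt_card.1 ((mem_powersetCard.1 hT).2 ▸ hm)
    exact prod_eq_zero ((mem_offDiag (x := (x, y))).2 ⟨hx, hy, hxy⟩) rfl
  have hone : levelProd (fun _ _ : α => (0 : ℤ)) m = 1 :=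
    prod_eq_one fun T hT => by rw [hpair T hT, sub_zero]
  simp [h, genericParam, hone] at heval

lemma det_sum_twistMatrix_of_mem_nonZeroDivisors {n : ℕ} {q : Fin n → Fin n → R}
    (hq : ∀ m, 2 ≤ m → levelProd q m ∈ R⁰) :
    (∑ g, twistMatrix q g).det =
      ∏ m ∈ Icc 2 n, levelProd q m ^ ((m - 2)! * (n - m + 1)!) := by
  rw [← prefixSum_self, det_prefixSum hq le_rfl]
  refine prod_congr rfl fun m hm => ?_
  rw [Nat.sub_add_comm (mem_Icc.1 hm).2, Nat.factorial_succ, mul_assoc, mul_comm (n - m)!]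

end Specialization

theorem det_A_factorization_general {R : Type*} [CommRing R] {n : ℕ} (q : Fin n → Fin n → R) :
    (∑ g, twistMatrix q g).det =
      ∏ m ∈ Icc 2 n, ∏ T ∈ powersetCard m (univ : Finset (Fin n)),
        (1 - pairProd q T) ^ ((m - 2)! * (n - m + 1)!) := by
  simp only [prod_pow, ← levelProd.eq_def]
  let ev : MvPolynomial (Fin n × Fin n) ℤ →+* R :=
    MvPolynomial.eval₂Hom (Int.castRingHom R) fun p => q p.1 p.2
  have hev : (fun i j => ev (genericParam (Fin n) i j)) = q := by
    ext i j
    simp [ev, genericParam]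
  have hgeneric := congrArg ev (det_sum_twistMatrix_of_mem_nonZeroDivisors
    fun _ hm => levelProd_genericParam_mem_nonZeroDivisors (α := Fin n) hm)
  simpa only [RingHom.map_det, map_sum, map_twistMatrix, map_prod, map_pow, map_levelProd, hev]
    using hgeneric

end

/-- The determinant of `A_Q = ∑_{g ∈ S_n} M_q(g)` factors as
`∏_{m=2}^{n} ∏_T (1 − σ_T)^{(m−2)!·(n−m+1)!}`, the inner product being over all
subsets `T ⊆ Fin n` of cardinality `m`. -/
theorem det_A_factorization (n : ℕ) (hn : 1 ≤ n) (q : Fin n → Fin n → ℂ) :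
    (∑ g : Equiv.Perm (Fin n), twistMat n q g).det =
      ∏ m ∈ Finset.Icc 2 n,
        ∏ T ∈ Finset.powersetCard m (Finset.univ : Finset (Fin n)),
          (1 - sigmaT q T) ^ (Nat.factorial (m - 2) * Nat.factorial (n - m + 1)) := by
  simp only [twistMat_eq_twistMatrix, sigmaT_eq_pairProd]
  exact det_A_factorization_general q
end
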